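/- arXiv:2101.01680 — 2 statements merged into one kernel-verified Lean document; each statement's English description precedes it below -/
import Mathlib

section
/- For every α ∈ (0,2), the function ρ_α is strictly increasing on the interval [t₀(α), min(π, πα)): if t₀(α) ≤ θ₁ < θ₂ < min(π, πα) then ρ_α(θ₁) < ρ_α(θ₂). -/
open MeasureTheory Set

/-- `t₀(α) = 2πα/(α+2)`. -/
noncomputable def t0 (α : ℝ) : ℝ := 2 * Real.pi * α / (α + 2)

/-- `Z₀(θ) = (sin t₀(α) / sin θ)^(1/α)`. -/
noncomputable def Z0 (α θ : ℝ) : ℝ := (Real.sin (t0 α) / Real.sin θ) ^ (1 / α)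


theorem cos_sub_sq_mul_sin_two_mul_le {θ φ x : ℝ} (hφ0 : 0 ≤ φ) (hφx : φ ≤ x)
    (hx : x ≤ Real.pi / 2) (hθx : 2 * x ≤ θ) (hθφ : θ - φ ≤ Real.pi / 2) :
    Real.cos (θ - φ) ^ 2 * Real.sin (2 * φ) ≤ Real.cos (θ - x) ^ 2 * Real.sin (2 * x) := by
  have hderiv (y : ℝ) : HasDerivAt (fun y => Real.cos (θ - y) ^ 2 * Real.sin (2 * y))
      (2 * Real.cos (θ - y) * Real.cos (θ - 3 * y)) y := by
    have h1 : HasDerivAt (fun y => Real.cos (θ - y)) (Real.sin (θ - y)) y := by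
      simpa using ((hasDerivAt_id y).const_sub θ).cos
    have h2 : HasDerivAt (fun y => Real.sin (2 * y)) (Real.cos (2 * y) * 2) y := by
      simpa using ((hasDerivAt_id y).const_mul 2).sin
    refine ((h1.pow 2).mul h2).congr_deriv ?_
    rw [show θ - 3 * y = (θ - y) - 2 * y by ring, Real.cos_sub (θ - y)]
    simp
    ring
  refine monotoneOn_of_deriv_nonneg (convex_Icc φ x)
    (fun y _ => (hderiv y).continuousAt.continuousWithinAt)
    (fun y _ => (hderiv y).differentiableAt.differentiableWithinAt) (fun y hy => ?_)
    (left_mem_Icc.2 hφx) (right_mem_Icc.2 hφx) hφx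
  rw [interior_Icc] at hy
  rw [(hderiv y).deriv]
  have h1 : 0 ≤ Real.cos (θ - y) :=
    Real.cos_nonneg_of_neg_pi_div_two_le_of_le (by linarith [hy.1, hy.2]) (by linarith [hy.1])
  have h2 : 0 ≤ Real.cos (θ - 3 * y) :=
    Real.cos_nonneg_of_neg_pi_div_two_le_of_le (by linarith [hy.1, hy.2]) (by linarith [hy.1])
  positivity

theorem antitoneOn_cos_sub_mul_sin_rpow {α x a b : ℝ} (hα0 : 0 < α) (ha : 0 < a)
    (hb : b < Real.pi)
    (h : ∀ y ∈ Ioo a b, -Real.cos (2 * y - x) ≤ (1 + 2 * α) * Real.cos x) :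
    AntitoneOn (fun y => Real.cos (y - x) * Real.sin y ^ (-(1 / α + 1))) (Icc a b) := by
  have hs (y : ℝ) (hy : y ∈ Icc a b) : 0 < Real.sin y :=
    Real.sin_pos_of_pos_of_lt_pi (by linarith [hy.1]) (by linarith [hy.2])
  have hderiv (y : ℝ) (hy : y ∈ Icc a b) :
      HasDerivAt (fun y => Real.cos (y - x) * Real.sin y ^ (-(1 / α + 1)))
      (Real.sin y ^ (-(1 / α + 1) - 1) / (2 * α) *
        (-Real.cos (2 * y - x) - (1 + 2 * α) * Real.cos x)) y := by
    have h1 : HasDerivAt (fun y => Real.cos (y - x)) (-Real.sin (y - x)) y := by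
      simpa using ((hasDerivAt_id y).sub_const x).cos
    have h2 := (Real.hasDerivAt_sin y).rpow_const (p := -(1 / α + 1)) (Or.inl (hs y hy).ne')
    refine (h1.mul h2).congr_deriv ?_
    have h3 : Real.sin y ^ (-(1 / α + 1)) = Real.sin y ^ (-(1 / α + 1) - 1) * Real.sin y := by
      rw [← Real.rpow_add_one (hs y hy).ne']; ring_nf
    have h4 : Real.cos (2 * y - x) =
        Real.cos y * Real.cos (y - x) - Real.sin y * Real.sin (y - x) := by
      rw [← Real.cos_add]; ring_nf
    have h5 : Real.cos x = Real.cos y * Real.cos (y - x) + Real.sin y * Real.sin (y - x) := by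
      rw [← Real.cos_sub]; ring_nf
    rw [h3, h4, h5]
    field_simp
    ring
  refine antitoneOn_of_deriv_nonpos (convex_Icc a b)
    (fun y hy => (hderiv y hy).continuousAt.continuousWithinAt)
    (fun y hy => (hderiv y (interior_subset hy)).differentiableAt.differentiableWithinAt)
    (fun y hy => ?_)
  rw [(hderiv y (interior_subset hy)).deriv]
  rw [interior_Icc] at hy
  have := hs y (Ioo_subset_Icc_self hy)
  exact mul_nonpos_of_nonneg_of_nonpos (by positivity) (by linarith [h y hy])

theorem sin_ratio_rpow_mul_cos_le {α x θ : ℝ} (hα0 : 0 < α) (hα2 : α < 2)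
    (hx : x = Real.pi * α / (α + 2)) (hθx : 2 * x ≤ θ) (hθ : θ < Real.pi) :
    (Real.sin (2 * x) / Real.sin θ) ^ (1 / α + 1) * Real.cos (θ - x) ≤ Real.cos x := by
  have hpi := Real.pi_pos
  have hx' : x * (α + 2) = Real.pi * α := by rw [hx]; field_simp
  have hx0 : 0 < x := by rw [hx]; positivity
  have hx2 : x < Real.pi / 2 := by nlinarith
  have hsθ : 0 < Real.sin θ := Real.sin_pos_of_pos_of_lt_pi (by linarith) hθ
  have hsx : 0 < Real.sin (2 * x) := Real.sin_pos_of_pos_of_lt_pi (by linarith) (by linarith)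
  have hcx : 0 < Real.cos x := Real.cos_pos_of_mem_Ioo ⟨by linarith, hx2⟩
  rcases le_or_gt (Real.pi / 2) (θ - x) with hlarge | hsmall
  · have : Real.cos (θ - x) ≤ 0 :=
      Real.cos_nonpos_of_pi_div_two_le_of_le hlarge (by linarith)
    have : (Real.sin (2 * x) / Real.sin θ) ^ (1 / α + 1) * Real.cos (θ - x) ≤ 0 :=
      mul_nonpos_of_nonneg_of_nonpos (by positivity) this
    linarith
  have hcθ : 0 < Real.cos (θ - x) := Real.cos_pos_of_mem_Ioo ⟨by linarith, hsmall⟩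
  have hmono : Real.cos (θ - x) ≤ Real.cos x :=
    Real.cos_le_cos_of_nonneg_of_le_pi hx0.le (by linarith) (by linarith)
  rcases le_or_gt (Real.sin (2 * x)) (Real.sin θ) with hle | hgt
  · have : (Real.sin (2 * x) / Real.sin θ) ^ (1 / α + 1) ≤ 1 :=
      Real.rpow_le_one (by positivity) ((div_le_one hsθ).2 hle) (by positivity)
    nlinarith
  obtain ⟨a, ha2x, haθ, hsa, hca, ha⟩ : ∃ a, 2 * x ≤ a ∧ a ≤ θ ∧
      Real.sin a = Real.sin (2 * x) ∧ Real.cos (a - x) ≤ Real.cos x ∧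
      Real.pi - 2 * x ≤ a := by
    rcases le_total (Real.pi / 2) (2 * x) with h | h
    · exact ⟨2 * x, le_rfl, hθx, rfl, by ring_nf; rfl, by linarith⟩
    · refine ⟨Real.pi - 2 * x, by linarith, ?_, Real.sin_pi_sub _, ?_, le_rfl⟩
      · by_contra! hcon
        rcases le_total θ (Real.pi / 2) with h' | h'
        · exact hgt.not_ge (Real.sin_le_sin_of_le_of_le_pi_div_two (by linarith) h' hθx)
        · have := Real.sin_le_sin_of_le_of_le_pi_div_two (x := 2 * x) (y := Real.pi - θ)
            (by linarith) (by linarith) (by linarith)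
          rw [Real.sin_pi_sub] at this
          exact hgt.not_ge this
      · exact Real.cos_le_cos_of_nonneg_of_le_pi hx0.le (by linarith) (by linarith)
  have hkey : ∀ y ∈ Ioo a θ, -Real.cos (2 * y - x) ≤ (1 + 2 * α) * Real.cos x := by
    intro y hy
    rcases le_total 1 α with h1 | h1
    · have h3x : Real.pi ≤ 3 * x := by nlinarith
      have : Real.cos (3 * x) ≤ Real.cos (2 * y - x) := by
        rw [← Real.cos_two_pi_sub, ← Real.cos_two_pi_sub (2 * y - x)]
        exact Real.cos_le_cos_of_nonneg_of_le_pi (by linarith [hy.2]) (by linarith)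
          (by linarith [hy.1])
      rw [Real.cos_three_mul] at this
      nlinarith [pow_pos hcx 3]
    · have hα : 2 / 5 ≤ α := by nlinarith
      suffices 1 ≤ (1 + 2 * α) * Real.cos x by linarith [Real.neg_one_le_cos (2 * y - x)]
      rcases le_total (2 / 3) α with h2 | h2
      · have : 1 / 2 ≤ Real.cos x := by
          rw [← Real.cos_pi_div_three]
          exact Real.cos_le_cos_of_nonneg_of_le_pi hx0.le (by linarith) (by nlinarith)
        nlinarith
      · have : 2 / 3 ≤ Real.cos x := by
          have h4 : Real.cos (Real.pi / 4) ≤ Real.cos x :=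
            Real.cos_le_cos_of_nonneg_of_le_pi hx0.le (by linarith) (by nlinarith)
          rw [Real.cos_pi_div_four] at h4
          have : (4 / 3 : ℝ) ≤ √2 := Real.le_sqrt_of_sq_le (by norm_num)
          linarith
        nlinarith
  have hanti := antitoneOn_cos_sub_mul_sin_rpow hα0 (by linarith) hθ hkey
    (left_mem_Icc.2 haθ) (right_mem_Icc.2 haθ) haθ
  simp only [hsa] at hanti
  rw [Real.div_rpow hsx.le hsθ.le]
  rw [Real.rpow_neg hsθ.le, Real.rpow_neg hsx.le] at hanti
  have hpos : 0 < Real.sin (2 * x) ^ (1 / α + 1) := by positivity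
  calc Real.sin (2 * x) ^ (1 / α + 1) / Real.sin θ ^ (1 / α + 1) * Real.cos (θ - x)
      = Real.sin (2 * x) ^ (1 / α + 1) *
        (Real.cos (θ - x) * (Real.sin θ ^ (1 / α + 1))⁻¹) := by ring
    _ ≤ Real.sin (2 * x) ^ (1 / α + 1) *
        (Real.cos (a - x) * (Real.sin (2 * x) ^ (1 / α + 1))⁻¹) := by gcongr
    _ = Real.cos (a - x) := by field_simp
    _ ≤ Real.cos x := hca

/-- The point with parameter `u` of the segment from `exp (I τ)` to `cos τ + c * sin τ`. -/
noncomputable def chord (τ c u : ℝ) : ℂ :=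
  ((Real.cos τ + c * Real.sin τ * u : ℝ) : ℂ) + ((Real.sin τ * (1 - u) : ℝ) : ℂ) * Complex.I

theorem chord_re (τ c u : ℝ) : (chord τ c u).re = Real.cos τ + c * Real.sin τ * u := by
  simp [chord, -Complex.ofReal_add, -Complex.ofReal_mul, -Complex.ofReal_sub]

theorem chord_im (τ c u : ℝ) : (chord τ c u).im = Real.sin τ * (1 - u) := by
  simp [chord, -Complex.ofReal_add, -Complex.ofReal_mul, -Complex.ofReal_sub]

theorem continuous_chord (τ : ℝ) : Continuous fun p : ℝ × ℝ => chord τ p.1 p.2 := by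
  unfold chord
  fun_prop

theorem chord_re_nonneg_or_im_ne_zero {τ c u : ℝ} (hτ : 0 < Real.sin τ)
    (hc : 0 ≤ Real.cos τ + c * Real.sin τ) (hu : u ≤ 1) :
    0 ≤ (chord τ c u).re ∨ (chord τ c u).im ≠ 0 := by
  rw [chord_re, chord_im]
  rcases hu.eq_or_lt with rfl | hu
  · left; simpa using hc
  · exact Or.inr (mul_pos hτ (sub_pos.2 hu)).ne'

theorem chord_mem_slitPlane {τ c u : ℝ} (hτ : 0 < Real.sin τ)
    (hc : 0 < Real.cos τ + c * Real.sin τ) (hu : u ≤ 1) :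
    chord τ c u ∈ Complex.slitPlane := by
  rw [Complex.mem_slitPlane_iff, chord_re, chord_im]
  rcases hu.eq_or_lt with rfl | hu
  · left; simpa using hc
  · exact Or.inr (mul_pos hτ (sub_pos.2 hu)).ne'

theorem hasDerivAt_chord_left (τ c u : ℝ) :
    HasDerivAt (fun c => chord τ c u) (Real.sin τ * u : ℝ) c := by
  have h : HasDerivAt (fun c : ℝ => Real.cos τ + c * Real.sin τ * u) (Real.sin τ * u) c := by
    simpa using (((hasDerivAt_id c).mul_const (Real.sin τ)).mul_const u).const_add (Real.cos τ)
  exact h.ofReal_comp.add_const _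

theorem hasDerivAt_chord_right (τ c u : ℝ) :
    HasDerivAt (chord τ c) (Real.sin τ * (c - Complex.I)) u := by
  have h : HasDerivAt (fun u : ℝ => Real.cos τ + c * Real.sin τ * u) (c * Real.sin τ) u := by
    simpa using ((hasDerivAt_id u).const_mul (c * Real.sin τ)).const_add (Real.cos τ)
  have h' : HasDerivAt (fun u : ℝ => Real.sin τ * (1 - u)) (-Real.sin τ) u := by
    simpa using ((hasDerivAt_id u).const_sub 1).const_mul (Real.sin τ)
  refine (h.ofReal_comp.add (h'.ofReal_comp.mul_const Complex.I)).congr_deriv ?_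
  push_cast
  ring

theorem Complex.sqrt_ne_zero_of_mem_slitPlane {z : ℂ} (hz : z ∈ Complex.slitPlane) :
    z.sqrt ≠ 0 := by
  rw [Complex.sqrt, Ne, Complex.cpow_eq_zero_iff]
  exact fun h => Complex.slitPlane_ne_zero hz h.1

theorem Complex.hasDerivAt_sqrt_inv {z : ℂ} (hz : z ∈ Complex.slitPlane) :
    HasDerivAt Complex.sqrt ((2 * z.sqrt)⁻¹) z := by
  refine (Complex.hasDerivAt_sqrt hz).congr_deriv ?_
  rw [show (-1 / 2 : ℂ) = -2⁻¹ by norm_num, Complex.cpow_neg, mul_inv, Complex.sqrt]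
  ring

theorem hasDerivAt_sqrt_chord_left {τ c u : ℝ} (hτ : 0 < Real.sin τ)
    (hc : 0 < Real.cos τ + c * Real.sin τ) (hu : u ≤ 1) :
    HasDerivAt (fun c => (chord τ c u).sqrt)
      (Real.sin τ * (u / (2 * (chord τ c u).sqrt))) c := by
  refine ((Complex.hasDerivAt_sqrt_inv (chord_mem_slitPlane hτ hc hu)).comp c
    (hasDerivAt_chord_left τ c u)).congr_deriv ?_
  push_cast
  ring

theorem hasDerivAt_sqrt_chord_rpow {α τ c v : ℝ} (hα : 0 < α) (hτ : 0 < Real.sin τ)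
    (hc : 0 < Real.cos τ + c * Real.sin τ) (hv : v ∈ Ioo (0 : ℝ) 1) :
    HasDerivAt (fun v : ℝ => (chord τ c (v ^ α)).sqrt)
      (Real.sin τ * (c - Complex.I) * (α * v ^ (α - 1) : ℝ) /
        (2 * (chord τ c (v ^ α)).sqrt)) v := by
  have hu : v ^ α ≤ 1 := Real.rpow_le_one hv.1.le hv.2.le hα.le
  have h1 : HasDerivAt (fun v : ℝ => chord τ c (v ^ α)) _ v :=
    HasDerivAt.scomp (h := fun v : ℝ => v ^ α) v (hasDerivAt_chord_right τ c (v ^ α))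
      (Real.hasDerivAt_rpow_const (p := α) (Or.inl hv.1.ne'))
  refine ((Complex.hasDerivAt_sqrt_inv (chord_mem_slitPlane hτ hc hu)).comp v h1).congr_deriv ?_
  rw [Complex.real_smul]
  push_cast
  ring

/-- The integral of the square root along the segment, weighted by `v ↦ v ^ α`. -/
noncomputable def sqrtIntegral (α τ c : ℝ) : ℂ := ∫ v in (0 : ℝ)..1, (chord τ c (v ^ α)).sqrt

/-- The derivative integrand of `sqrtIntegral` in `c`, up to the factor `sin τ`. -/
noncomputable def invSqrtIntegral (α τ c : ℝ) : ℂ :=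
  ∫ v in (0 : ℝ)..1, (v ^ α : ℝ) / (2 * (chord τ c (v ^ α)).sqrt)

theorem continuousOn_sqrt_chord {α τ c : ℝ} (hα : 0 < α) (hτ : 0 < Real.sin τ)
    (hc : 0 ≤ Real.cos τ + c * Real.sin τ) :
    ContinuousOn (fun v : ℝ => (chord τ c (v ^ α)).sqrt) (Icc 0 1) := by
  intro v hv
  have hu : v ^ α ≤ 1 := Real.rpow_le_one hv.1 hv.2 hα.le
  have h1 : ContinuousAt (fun v : ℝ => chord τ c (v ^ α)) v :=
    ((continuous_chord τ).comp
      (continuous_const.prodMk (Real.continuous_rpow_const hα.le))).continuousAt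
  exact (ContinuousAt.comp (f := fun v : ℝ => chord τ c (v ^ α))
    (Complex.continuousAt_sqrt (chord_re_nonneg_or_im_ne_zero hτ hc hu)) h1).continuousWithinAt

theorem continuousOn_div_sqrt_chord {α τ : ℝ} (hα : 0 < α) (hτ : 0 < Real.sin τ) :
    ContinuousOn (fun p : ℝ × ℝ => (p.2 ^ α : ℝ) / (2 * (chord τ p.1 (p.2 ^ α)).sqrt))
      ({c | 0 < Real.cos τ + c * Real.sin τ} ×ˢ Icc 0 1) := by
  rintro ⟨c, v⟩ ⟨hc, hv⟩
  have hu : v ^ α ≤ 1 := Real.rpow_le_one hv.1 hv.2 hα.le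
  have hslit := chord_mem_slitPlane hτ hc hu
  have hpow : Continuous fun p : ℝ × ℝ => p.2 ^ α := continuous_snd.rpow_const fun _ => .inr hα.le
  have h1 : ContinuousAt (fun p : ℝ × ℝ => chord τ p.1 (p.2 ^ α)) (c, v) :=
    ((continuous_chord τ).comp (continuous_fst.prodMk hpow)).continuousAt
  have h2 : ContinuousAt (fun p : ℝ × ℝ => (chord τ p.1 (p.2 ^ α)).sqrt) (c, v) :=
    ContinuousAt.comp (f := fun p : ℝ × ℝ => chord τ p.1 (p.2 ^ α))
      (Complex.hasDerivAt_sqrt_inv hslit).continuousAt h1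
  exact ((Complex.continuous_ofReal.comp hpow).continuousAt.div (continuousAt_const.mul h2)
    (mul_ne_zero two_ne_zero (Complex.sqrt_ne_zero_of_mem_slitPlane hslit))).continuousWithinAt

theorem continuousOn_div_sqrt_chord_right {α τ c : ℝ} (hα : 0 < α) (hτ : 0 < Real.sin τ)
    (hc : 0 < Real.cos τ + c * Real.sin τ) :
    ContinuousOn (fun v : ℝ => ((v ^ α : ℝ) : ℂ) / (2 * (chord τ c (v ^ α)).sqrt)) (Icc 0 1) :=
  (continuousOn_div_sqrt_chord hα hτ).comp (f := fun v : ℝ => (c, v)) (by fun_prop)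
    fun _ hv => ⟨hc, hv⟩

theorem hasDerivAt_sqrtIntegral {α τ c : ℝ} (hα : 0 < α) (hτ : 0 < Real.sin τ)
    (hc : 0 < Real.cos τ + c * Real.sin τ) :
    HasDerivAt (sqrtIntegral α τ) (Real.sin τ * invSqrtIntegral α τ c) c := by
  have hopen : IsOpen {c : ℝ | 0 < Real.cos τ + c * Real.sin τ} :=
    isOpen_lt continuous_const (by fun_prop)
  obtain ⟨ε, hε, hball⟩ := Metric.nhds_basis_closedBall.mem_iff.1 (hopen.mem_nhds hc)
  obtain ⟨M, hM⟩ := ((isCompact_closedBall c ε).prod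
    (isCompact_Icc (a := (0 : ℝ)) (b := 1))).exists_bound_of_continuousOn
      ((continuousOn_div_sqrt_chord hα hτ).mono (prod_mono hball Subset.rfl))
  have huIoc : uIoc (0 : ℝ) 1 ⊆ Icc 0 1 := by
    rw [uIoc_of_le zero_le_one]; exact Ioc_subset_Icc_self
  have hint (y : ℝ) (hy : 0 < Real.cos τ + y * Real.sin τ) :
      IntervalIntegrable (fun v : ℝ => (chord τ y (v ^ α)).sqrt) volume 0 1 :=
    ContinuousOn.intervalIntegrable_of_Icc zero_le_one (continuousOn_sqrt_chord hα hτ hy.le)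
  have hint' : IntervalIntegrable (fun v : ℝ => Real.sin τ *
      (((v ^ α : ℝ) : ℂ) / (2 * (chord τ c (v ^ α)).sqrt))) volume 0 1 :=
    (ContinuousOn.intervalIntegrable_of_Icc zero_le_one
      (continuousOn_div_sqrt_chord_right hα hτ hc)).const_mul _
  have := (intervalIntegral.hasDerivAt_integral_of_dominated_loc_of_deriv_le
    (bound := fun _ => Real.sin τ * M)
    (F := fun (c v : ℝ) => (chord τ c (v ^ α)).sqrt)
    (F' := fun (c v : ℝ) => Real.sin τ * (((v ^ α : ℝ) : ℂ) / (2 * (chord τ c (v ^ α)).sqrt)))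
    (Metric.closedBall_mem_nhds c hε)
    ((hopen.eventually_mem hc).mono fun y hy => (hint y hy).def'.aestronglyMeasurable)
    (hint c hc) hint'.def'.aestronglyMeasurable
    (ae_of_all _ fun v hv y hy => ?_) intervalIntegrable_const
    (ae_of_all _ fun v hv y hy => ?_)).2
  · rwa [intervalIntegral.integral_const_mul] at this
  · rw [norm_mul, Complex.norm_real, Real.norm_of_nonneg hτ.le]
    gcongr
    exact hM (y, v) ⟨hy, huIoc hv⟩
  · exact hasDerivAt_sqrt_chord_left hτ (hball hy)
      (Real.rpow_le_one (huIoc hv).1 (huIoc hv).2 hα.le)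

theorem continuousOn_sqrtIntegral {α τ : ℝ} (hα : 0 < α) (hτ : 0 < Real.sin τ) :
    ContinuousOn (sqrtIntegral α τ) {c | 0 ≤ Real.cos τ + c * Real.sin τ} := by
  let F : ℝ → ℝ → ℂ := fun c v =>
    (chord τ (max c (-Real.cos τ / Real.sin τ)) ((max 0 (min v 1)) ^ α)).sqrt
  have hF : Continuous (Function.uncurry F) := by
    refine continuous_iff_continuousAt.2 fun p => ?_
    have h1 : Continuous fun p : ℝ × ℝ =>
        chord τ (max p.1 (-Real.cos τ / Real.sin τ)) ((max 0 (min p.2 1)) ^ α) :=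
      (continuous_chord τ).comp ((by fun_prop : Continuous fun p : ℝ × ℝ =>
        max p.1 (-Real.cos τ / Real.sin τ)).prodMk
        ((by fun_prop : Continuous fun p : ℝ × ℝ => max 0 (min p.2 1)).rpow_const
          fun _ => .inr hα.le))
    refine ContinuousAt.comp (g := Complex.sqrt) (f := fun p : ℝ × ℝ =>
        chord τ (max p.1 (-Real.cos τ / Real.sin τ)) ((max 0 (min p.2 1)) ^ α))
      (Complex.continuousAt_sqrt (chord_re_nonneg_or_im_ne_zero hτ ?_ ?_)) h1.continuousAt
    · have := (div_le_iff₀ hτ).1 (le_max_right p.1 (-Real.cos τ / Real.sin τ))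
      linarith
    · exact Real.rpow_le_one (le_max_left _ _) (max_le zero_le_one (min_le_right _ _)) hα.le
  refine (intervalIntegral.continuous_parametric_intervalIntegral_of_continuous' (μ := volume) hF
    0 1).continuousOn.congr fun c hc => ?_
  refine intervalIntegral.integral_congr fun v hv => ?_
  rw [uIcc_of_le zero_le_one] at hv
  have h1 : max c (-Real.cos τ / Real.sin τ) = c := by
    refine max_eq_left ((div_le_iff₀ hτ).2 ?_)
    have : 0 ≤ Real.cos τ + c * Real.sin τ := hc
    linarith
  simp only [F, h1, min_eq_left hv.2, max_eq_right hv.1]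

theorem sqrtIntegral_eq {α τ c : ℝ} (hα : 0 < α) (hτ : 0 < Real.sin τ)
    (hc : 0 < Real.cos τ + c * Real.sin τ) :
    sqrtIntegral α τ c = (√(Real.cos τ + c * Real.sin τ) : ℝ) -
      α * Real.sin τ * (c - Complex.I) * invSqrtIntegral α τ c := by
  have hcont := continuousOn_sqrt_chord hα hτ hc.le
  have hcont' := continuousOn_div_sqrt_chord_right hα hτ hc
  have hint := ContinuousOn.intervalIntegrable_of_Icc (μ := volume) zero_le_one hcont
  have hint' := (ContinuousOn.intervalIntegrable_of_Icc (μ := volume) zero_le_one hcont').const_mul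
    (α * Real.sin τ * (c - Complex.I))
  have hftc := intervalIntegral.integral_eq_sub_of_hasDerivAt_of_le
    (f := fun v : ℝ => (v : ℂ) * (chord τ c (v ^ α)).sqrt) zero_le_one
    (Complex.continuous_ofReal.continuousOn.mul hcont) (fun v hv => ?_) (hint.add hint')
  · rw [intervalIntegral.integral_add hint hint', intervalIntegral.integral_const_mul] at hftc
    have h1 : chord τ c 1 = ((Real.cos τ + c * Real.sin τ : ℝ) : ℂ) := by simp [chord]
    rw [Real.one_rpow, h1, Complex.sqrt_of_nonneg (Complex.zero_le_real.2 hc.le),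
      Complex.ofReal_re] at hftc
    simp only [Complex.ofReal_one, one_mul, Complex.ofReal_zero, zero_mul, sub_zero] at hftc
    rw [← hftc]
    simp [sqrtIntegral, invSqrtIntegral]
  · refine ((hasDerivAt_id v).ofReal_comp.mul
      (hasDerivAt_sqrt_chord_rpow hα hτ hc hv)).congr_deriv ?_
    have : ((v ^ α : ℝ) : ℂ) = v * (v ^ (α - 1) : ℝ) := by
      rw [← Complex.ofReal_mul, mul_comm, ← Real.rpow_add_one hv.1.ne']; ring_nf
    rw [this]
    simp only [id]
    push_cast
    ring

theorem Complex.inv_sqrt_eq {z : ℂ} (hz : z ≠ 0) :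
    (z.sqrt)⁻¹ = ((√‖z‖)⁻¹ : ℝ) * (Real.cos (z.arg / 2) - Real.sin (z.arg / 2) * Complex.I) := by
  have hn : 0 < ‖z‖ := norm_pos_iff.2 hz
  have h1 : Complex.log z / 2 = (Real.log √‖z‖ : ℝ) + ((z.arg / 2 : ℝ) : ℂ) * Complex.I := by
    rw [Real.log_sqrt hn.le, Complex.log]
    push_cast
    ring
  rw [sqrt_eq_exp hz, ← Complex.exp_neg, h1, neg_add, Complex.exp_add, ← Complex.ofReal_neg,
    ← Complex.ofReal_exp, Real.exp_neg, Real.exp_log (Real.sqrt_pos.2 hn), ← neg_mul,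
    Complex.exp_mul_I, Complex.cos_neg, Complex.sin_neg, Complex.ofReal_cos, Complex.ofReal_sin]
  ring

theorem cos_add_neg_cot_mul_sin {τ θ : ℝ} (hθ : Real.sin θ ≠ 0) :
    Real.cos τ + -Real.cos θ / Real.sin θ * Real.sin τ = Real.sin (θ - τ) / Real.sin θ := by
  rw [Real.sin_sub]
  field_simp
  ring

theorem neg_cos_div_sqrt_le_of_chord {α x θ u : ℝ} (hα0 : 0 < α) (hα2 : α < 2)
    (hx : x = Real.pi * α / (α + 2)) (hθx : 2 * x ≤ θ) (hθ : θ < Real.pi)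
    (hu0 : 0 ≤ u) (hu1 : u < 1) :
    -(Real.cos x / √(1 - u)) ≤
      (Real.sin (2 * x) / Real.sin θ) ^ (1 / α) * Real.sin (2 * x) *
        (-Real.cos θ / Real.sin θ *
          ((chord (2 * x) (-Real.cos θ / Real.sin θ) u).sqrt)⁻¹.re +
          ((chord (2 * x) (-Real.cos θ / Real.sin θ) u).sqrt)⁻¹.im) := by
  have hpi := Real.pi_pos
  have hx' : x * (α + 2) = Real.pi * α := by rw [hx]; field_simp
  have hx0 : 0 < x := by rw [hx]; positivity
  have hx2 : x < Real.pi / 2 := by nlinarith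
  have hsθ : 0 < Real.sin θ := Real.sin_pos_of_pos_of_lt_pi (by linarith) hθ
  have hsx : 0 < Real.sin (2 * x) := Real.sin_pos_of_pos_of_lt_pi (by linarith) (by linarith)
  have hcx : 0 < Real.cos x := Real.cos_pos_of_mem_Ioo ⟨by linarith, hx2⟩
  have hratio := sin_ratio_rpow_mul_cos_le hα0 hα2 hx hθx hθ
  have hcot := cos_add_neg_cot_mul_sin (τ := 2 * x) hsθ.ne'
  set c := -Real.cos θ / Real.sin θ with hc
  have hkappa : 0 ≤ Real.cos (2 * x) + c * Real.sin (2 * x) := by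
    rw [hcot]
    exact div_nonneg (Real.sin_nonneg_of_nonneg_of_le_pi (by linarith) (by linarith)) hsθ.le
  have him := chord_im (2 * x) c u
  have hre := chord_re (2 * x) c u
  set z := chord (2 * x) c u
  have h1u : 0 < 1 - u := sub_pos.2 hu1
  have himpos : 0 < z.im := him ▸ mul_pos hsx h1u
  have hz : z ≠ 0 := fun h => by simp [h] at himpos
  have hr : 0 < ‖z‖ := norm_pos_iff.2 hz
  have hsin : ‖z‖ * Real.sin z.arg = z.im := Complex.norm_mul_sin_arg z
  have hcos : ‖z‖ * Real.cos z.arg = z.re := Complex.norm_mul_cos_arg z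
  have harg0 : 0 ≤ z.arg := Complex.arg_nonneg_iff.2 himpos.le
  have hargx : z.arg ≤ 2 * x := by
    by_contra! hlt
    have h1 : 0 < Real.sin (z.arg - 2 * x) := Real.sin_pos_of_pos_of_lt_pi (by linarith)
      (by linarith [Complex.arg_le_pi z])
    have h2 : ‖z‖ * Real.sin (z.arg - 2 * x) =
        -(u * Real.sin (2 * x) * (Real.cos (2 * x) + c * Real.sin (2 * x))) := by
      rw [Real.sin_sub, mul_sub, ← mul_assoc, ← mul_assoc, hsin, hcos, him, hre]
      ring
    have h3 : 0 < ‖z‖ * Real.sin (z.arg - 2 * x) := by positivity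
    have h4 : 0 ≤ u * Real.sin (2 * x) * (Real.cos (2 * x) + c * Real.sin (2 * x)) := by
      positivity
    linarith
  set φ := z.arg / 2 with hφ
  rw [show z.arg = 2 * φ by rw [hφ]; ring] at hsin harg0 hargx
  have hmain : c * (z.sqrt)⁻¹.re + (z.sqrt)⁻¹.im =
      -((√‖z‖)⁻¹ * Real.cos (θ - φ) / Real.sin θ) := by
    rw [Complex.inv_sqrt_eq hz, Complex.re_ofReal_mul, Complex.im_ofReal_mul, ← hφ]
    simp only [Complex.sub_re, Complex.sub_im, Complex.ofReal_re, Complex.ofReal_im,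
      Complex.mul_re, Complex.mul_im, Complex.I_re, Complex.I_im]
    rw [Real.cos_sub, hc]
    field_simp
    ring
  have hsq : 0 < √(1 - u) := Real.sqrt_pos.2 h1u
  have hbound : (√‖z‖)⁻¹ * Real.cos (θ - φ) ≤ max 0 (Real.cos (θ - x) / √(1 - u)) := by
    rcases le_total (Real.pi / 2) (θ - φ) with h | h
    · exact le_max_of_le_left (mul_nonpos_of_nonneg_of_nonpos (by positivity)
        (Real.cos_nonpos_of_pi_div_two_le_of_le h (by linarith)))
    refine le_max_of_le_right ?_
    have hcx' : 0 ≤ Real.cos (θ - x) :=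
      Real.cos_nonneg_of_neg_pi_div_two_le_of_le (by linarith) (by linarith)
    refine le_of_sq_le_sq ?_ (by positivity)
    have hmono := cos_sub_sq_mul_sin_two_mul_le (θ := θ) (φ := φ) (x := x)
      (by linarith) (by linarith) hx2.le hθx h
    rw [mul_pow, inv_pow, Real.sq_sqrt hr.le, div_pow, Real.sq_sqrt h1u.le,
      inv_mul_le_iff₀ hr, mul_div_assoc', le_div_iff₀ h1u]
    refine le_of_mul_le_mul_right ?_ hsx
    calc Real.cos (θ - φ) ^ 2 * (1 - u) * Real.sin (2 * x)
        = ‖z‖ * (Real.cos (θ - φ) ^ 2 * Real.sin (2 * φ)) := by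
          linear_combination Real.cos (θ - φ) ^ 2 * (-him - hsin)
      _ ≤ ‖z‖ * (Real.cos (θ - x) ^ 2 * Real.sin (2 * x)) := by gcongr
      _ = ‖z‖ * Real.cos (θ - x) ^ 2 * Real.sin (2 * x) := by ring
  have hs0 : 0 < Real.sin (2 * x) / Real.sin θ := by positivity
  rw [hmain]
  rw [Real.rpow_add_one hs0.ne'] at hratio
  set K := (Real.sin (2 * x) / Real.sin θ) ^ (1 / α) * (Real.sin (2 * x) / Real.sin θ) with hK
  have hK0 : 0 < K := by positivity
  have hfinal : K * ((√‖z‖)⁻¹ * Real.cos (θ - φ)) ≤ Real.cos x / √(1 - u) := by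
    refine (mul_le_mul_of_nonneg_left hbound hK0.le).trans ?_
    rw [mul_max_of_nonneg _ _ hK0.le, mul_zero, mul_div_assoc']
    exact max_le (by positivity) (by gcongr)
  calc -(Real.cos x / √(1 - u)) ≤ -(K * ((√‖z‖)⁻¹ * Real.cos (θ - φ))) := neg_le_neg hfinal
    _ = _ := by rw [hK]; ring

theorem continuous_sqrt_one_sub_rpow {α : ℝ} (hα : 0 < α) :
    Continuous fun v : ℝ => √(1 - v ^ α) :=
  (continuous_const.sub (Real.continuous_rpow_const hα.le)).sqrt

theorem intervalIntegrable_and_integral_rpow_div_sqrt {α : ℝ} (hα : 0 < α) :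
    IntervalIntegrable (fun v : ℝ => α * v ^ α / (2 * √(1 - v ^ α))) volume 0 1 ∧
      ∫ v in (0 : ℝ)..1, α * v ^ α / (2 * √(1 - v ^ α)) = ∫ v in (0 : ℝ)..1, √(1 - v ^ α) := by
  have hcont := continuous_sqrt_one_sub_rpow hα
  let F : ℝ → ℝ := fun v => (∫ y in (0 : ℝ)..v, √(1 - y ^ α)) - v * √(1 - v ^ α)
  have hF : Continuous F :=
    (intervalIntegral.continuous_primitive (fun a b => hcont.intervalIntegrable a b) 0).sub
      (continuous_id.mul hcont)
  have hderiv (v : ℝ) (hv : v ∈ Ioo (0 : ℝ) 1) :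
      HasDerivAt F (α * v ^ α / (2 * √(1 - v ^ α))) v := by
    have hpos : 0 < 1 - v ^ α := sub_pos.2 (Real.rpow_lt_one hv.1.le hv.2 hα)
    have h1 : HasDerivAt (fun v => ∫ y in (0 : ℝ)..v, √(1 - y ^ α)) (√(1 - v ^ α)) v :=
      hcont.integral_hasStrictDerivAt 0 v |>.hasDerivAt
    have h2 := ((Real.hasDerivAt_rpow_const (p := α) (Or.inl hv.1.ne')).const_sub 1).sqrt hpos.ne'
    refine (h1.sub ((hasDerivAt_id v).mul h2)).congr_deriv ?_
    have : v ^ α = v * v ^ (α - 1) := by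
      rw [mul_comm, ← Real.rpow_add_one hv.1.ne']; ring_nf
    have hs : √(1 - v ^ α) ≠ 0 := (Real.sqrt_pos.2 hpos).ne'
    simp only [id]
    nth_rewrite 4 [this]
    ring
  have hint : IntervalIntegrable (fun v : ℝ => α * v ^ α / (2 * √(1 - v ^ α))) volume 0 1 := by
    refine intervalIntegral.intervalIntegrable_deriv_of_nonneg (g := F) hF.continuousOn
      (fun v hv => ?_) (fun v hv => ?_) <;>
    rw [min_eq_left zero_le_one, max_eq_right zero_le_one] at hv
    · exact hderiv v hv
    · have := hv.1
      positivity
  refine ⟨hint, ?_⟩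
  rw [intervalIntegral.integral_eq_sub_of_hasDerivAt_of_le zero_le_one hF.continuousOn hderiv hint]
  simp [F]

theorem integral_sqrt_one_sub_rpow_pos {α : ℝ} (hα : 0 < α) :
    0 < ∫ v in (0 : ℝ)..1, √(1 - v ^ α) :=
  intervalIntegral.intervalIntegral_pos_of_pos_on
    ((continuous_sqrt_one_sub_rpow hα).intervalIntegrable 0 1)
    (fun _ hv => Real.sqrt_pos.2 (sub_pos.2 (Real.rpow_lt_one hv.1.le hv.2 hα))) zero_lt_one

theorem neg_cos_mul_integral_le {α x θ : ℝ} (hα0 : 0 < α) (hα2 : α < 2)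
    (hx : x = Real.pi * α / (α + 2)) (hθx : 2 * x < θ) (hθ : θ < Real.pi)
    (hc : 0 < Real.cos (2 * x) + -Real.cos θ / Real.sin θ * Real.sin (2 * x))
    (hsx : 0 < Real.sin (2 * x)) :
    -(Real.cos x * ∫ v in (0 : ℝ)..1, √(1 - v ^ α)) / α ≤
      (Real.sin (2 * x) / Real.sin θ) ^ (1 / α) * Real.sin (2 * x) *
        (-Real.cos θ / Real.sin θ *
          (invSqrtIntegral α (2 * x) (-Real.cos θ / Real.sin θ)).re +
          (invSqrtIntegral α (2 * x) (-Real.cos θ / Real.sin θ)).im) := by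
  have hpoint := fun u => neg_cos_div_sqrt_le_of_chord (u := u) hα0 hα2 hx hθx.le hθ
  set c := -Real.cos θ / Real.sin θ
  set K := (Real.sin (2 * x) / Real.sin θ) ^ (1 / α) * Real.sin (2 * x)
  obtain ⟨hint, heq⟩ := intervalIntegrable_and_integral_rpow_div_sqrt hα0
  let L : ℂ →L[ℝ] ℝ := K • (c • Complex.reCLM + Complex.imCLM)
  have hL (z : ℂ) : L z = K * (c * z.re + z.im) := by
    simp [L]
    ring
  have hint' := ContinuousOn.intervalIntegrable_of_Icc (μ := volume) zero_le_one
    (continuousOn_div_sqrt_chord_right hα0 hsx hc)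
  have hintL : IntervalIntegrable (fun v : ℝ =>
      L (((v ^ α : ℝ) : ℂ) / (2 * (chord (2 * x) c (v ^ α)).sqrt))) volume 0 1 :=
    ContinuousOn.intervalIntegrable_of_Icc zero_le_one
      (L.continuous.comp_continuousOn (continuousOn_div_sqrt_chord_right hα0 hsx hc))
  rw [← hL, invSqrtIntegral, ← L.intervalIntegral_comp_comm hint', ← heq,
    show ∀ I : ℝ, -(Real.cos x * I) / α = -(Real.cos x / α) * I from fun _ => by ring,
    ← intervalIntegral.integral_const_mul]
  refine intervalIntegral.integral_mono_on_of_le_Ioo zero_le_one (hint.const_mul _) hintL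
    fun v hv => ?_
  have hv0 : 0 ≤ v ^ α := Real.rpow_nonneg hv.1.le α
  have hp := mul_le_mul_of_nonneg_left (hpoint (v ^ α) hv0 (Real.rpow_lt_one hv.1.le hv.2 hα0))
    (show 0 ≤ v ^ α / 2 by positivity)
  have hrew : ((v ^ α : ℝ) : ℂ) / (2 * (chord (2 * x) c (v ^ α)).sqrt) =
      ((v ^ α / 2 : ℝ) : ℂ) * ((chord (2 * x) c (v ^ α)).sqrt)⁻¹ := by
    push_cast
    rw [div_eq_mul_inv, mul_inv]
    ring
  rw [hrew, hL, Complex.re_ofReal_mul, Complex.im_ofReal_mul]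
  calc -(Real.cos x / α) * (α * v ^ α / (2 * √(1 - v ^ α)))
      = v ^ α / 2 * -(Real.cos x / √(1 - v ^ α)) := by
        field_simp
    _ ≤ _ := hp
    _ = _ := by ring

theorem t0_eq (α : ℝ) : t0 α = 2 * (Real.pi * α / (α + 2)) := by
  unfold t0
  ring

theorem t0_pos {α : ℝ} (hα0 : 0 < α) : 0 < t0 α := by
  have := Real.pi_pos
  unfold t0
  positivity

theorem t0_lt_pi {α : ℝ} (hα0 : 0 < α) (hα2 : α < 2) : t0 α < Real.pi := by
  have := Real.pi_pos
  rw [t0, div_lt_iff₀ (by linarith)]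
  nlinarith

theorem sin_t0_pos {α : ℝ} (hα0 : 0 < α) (hα2 : α < 2) : 0 < Real.sin (t0 α) :=
  Real.sin_pos_of_pos_of_lt_pi (t0_pos hα0) (t0_lt_pi hα0 hα2)

theorem sin_pos_of_t0_le {α θ : ℝ} (hα0 : 0 < α) (hθ0 : t0 α ≤ θ) (hθ : θ < Real.pi) :
    0 < Real.sin θ :=
  Real.sin_pos_of_pos_of_lt_pi ((t0_pos hα0).trans_le hθ0) hθ

/-- The closed form of `ρ` obtained by rescaling the contour to the unit interval. -/
noncomputable def scaledRho (α θ : ℝ) : ℝ :=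
  Z0 α θ * (sqrtIntegral α (t0 α) (-Real.cos θ / Real.sin θ)).im
    - 2 * Real.sin (θ / α) * ∫ ξ in (0 : ℝ)..1, √(1 - ξ ^ α)

theorem hasDerivAt_Z0 {α θ : ℝ} (hτ : 0 < Real.sin (t0 α)) (hθ : 0 < Real.sin θ) :
    HasDerivAt (Z0 α) (Z0 α θ * (-Real.cos θ / Real.sin θ) / α) θ := by
  have hs : 0 < Real.sin (t0 α) / Real.sin θ := by positivity
  have h1 := ((Real.hasDerivAt_sin θ).fun_inv hθ.ne').const_mul (Real.sin (t0 α))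
  have h2 := h1.rpow_const (p := 1 / α) (Or.inl (by positivity))
  simp only [← div_eq_mul_inv] at h2
  refine h2.congr_deriv ?_
  rw [Z0, Real.rpow_sub_one hs.ne']
  field_simp

theorem hasDerivAt_neg_cos_div_sin {θ : ℝ} (hθ : Real.sin θ ≠ 0) :
    HasDerivAt (fun θ => -Real.cos θ / Real.sin θ)
      (1 + (-Real.cos θ / Real.sin θ) ^ 2) θ := by
  refine ((Real.hasDerivAt_cos θ).neg.div (Real.hasDerivAt_sin θ) hθ).congr_deriv ?_
  field_simp
  simp only [Pi.neg_apply]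
  ring

theorem hasDerivAt_scaledRho {α θ : ℝ} (hα0 : 0 < α) (hα2 : α < 2) (hθ0 : t0 α < θ)
    (hθ : θ < Real.pi) :
    HasDerivAt (scaledRho α)
      (Z0 α θ * Real.sin (t0 α) * (-Real.cos θ / Real.sin θ *
          (invSqrtIntegral α (t0 α) (-Real.cos θ / Real.sin θ)).re +
          (invSqrtIntegral α (t0 α) (-Real.cos θ / Real.sin θ)).im) -
        2 * (Real.cos (θ / α) / α) * ∫ ξ in (0 : ℝ)..1, √(1 - ξ ^ α)) θ := by
  have hτ := sin_t0_pos hα0 hα2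
  have hsθ := sin_pos_of_t0_le hα0 hθ0.le hθ
  have hkappa : 0 < Real.cos (t0 α) + -Real.cos θ / Real.sin θ * Real.sin (t0 α) := by
    rw [cos_add_neg_cot_mul_sin hsθ.ne']
    exact div_pos (Real.sin_pos_of_pos_of_lt_pi (by linarith)
      (by linarith [t0_pos hα0])) hsθ
  have hS := HasDerivAt.scomp (h := fun θ => -Real.cos θ / Real.sin θ) θ
    (hasDerivAt_sqrtIntegral hα0 hτ hkappa) (hasDerivAt_neg_cos_div_sin hsθ.ne')
  have hSim := Complex.imCLM.hasFDerivAt.comp_hasDerivAt θ hS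
  have hsin : HasDerivAt (fun θ => Real.sin (θ / α)) (Real.cos (θ / α) / α) θ := by
    simpa [div_eq_mul_inv] using ((hasDerivAt_id θ).div_const α).sin
  refine (((hasDerivAt_Z0 hτ hsθ).mul hSim).sub
    ((hsin.const_mul 2).mul_const _)).congr_deriv ?_
  have him : (sqrtIntegral α (t0 α) (-Real.cos θ / Real.sin θ)).im =
      -(α * Real.sin (t0 α) * (-Real.cos θ / Real.sin θ *
        (invSqrtIntegral α (t0 α) (-Real.cos θ / Real.sin θ)).im -
        (invSqrtIntegral α (t0 α) (-Real.cos θ / Real.sin θ)).re)) := by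
    rw [sqrtIntegral_eq hα0 hτ hkappa]
    simp only [Complex.sub_im, Complex.mul_im, Complex.mul_re, Complex.sub_re, Complex.ofReal_re,
      Complex.ofReal_im, Complex.I_re, Complex.I_im]
    ring
  simp only [Complex.imCLM_apply, Function.comp, Complex.real_smul, Complex.im_ofReal_mul, him]
  field_simp
  ring

theorem continuousOn_scaledRho {α : ℝ} (hα0 : 0 < α) (hα2 : α < 2) :
    ContinuousOn (scaledRho α) (Ico (t0 α) (min Real.pi (Real.pi * α))) := by
  have hτ := sin_t0_pos hα0 hα2
  have hsθ (θ : ℝ) (hθ : θ ∈ Ico (t0 α) (min Real.pi (Real.pi * α))) : 0 < Real.sin θ :=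
    sin_pos_of_t0_le hα0 hθ.1 (hθ.2.trans_le (min_le_left _ _))
  refine ContinuousOn.sub (ContinuousOn.mul
    (fun θ hθ => (hasDerivAt_Z0 hτ (hsθ θ hθ)).continuousAt.continuousWithinAt) ?_) (by fun_prop)
  refine Complex.continuous_im.comp_continuousOn ((continuousOn_sqrtIntegral hα0 hτ).comp
    (fun θ hθ => (hasDerivAt_neg_cos_div_sin (hsθ θ hθ).ne').continuousAt.continuousWithinAt)
    fun θ hθ => ?_)
  rw [mem_ofPred_eq, cos_add_neg_cot_mul_sin (hsθ θ hθ).ne']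
  have := hθ.2.trans_le (min_le_left _ _)
  exact div_nonneg (Real.sin_nonneg_of_nonneg_of_le_pi (by linarith [hθ.1])
    (by linarith [t0_pos hα0])) (hsθ θ hθ).le

theorem strictMonoOn_scaledRho {α : ℝ} (hα0 : 0 < α) (hα2 : α < 2) :
    StrictMonoOn (scaledRho α) (Ico (t0 α) (min Real.pi (Real.pi * α))) := by
  refine strictMonoOn_of_deriv_pos (convex_Ico _ _) (continuousOn_scaledRho hα0 hα2)
    fun θ hθ => ?_
  rw [interior_Ico, mem_Ioo, lt_min_iff] at hθ
  obtain ⟨hθ0, hθ, hθα⟩ := hθ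
  rw [(hasDerivAt_scaledRho hα0 hα2 hθ0 hθ).deriv]
  have hτ := sin_t0_pos hα0 hα2
  have hsθ := sin_pos_of_t0_le hα0 hθ0.le hθ
  have hkappa : 0 < Real.cos (t0 α) + -Real.cos θ / Real.sin θ * Real.sin (t0 α) := by
    rw [cos_add_neg_cot_mul_sin hsθ.ne']
    exact div_pos (Real.sin_pos_of_pos_of_lt_pi (by linarith)
      (by linarith [t0_pos hα0])) hsθ
  rw [t0_eq] at hkappa hτ hθ0
  have hbound := neg_cos_mul_integral_le hα0 hα2 rfl hθ0 hθ hkappa hτ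
  have hC := integral_sqrt_one_sub_rpow_pos hα0
  rw [← t0_eq] at hbound
  rw [Z0]
  set x := Real.pi * α / (α + 2) with hx
  have hpi := Real.pi_pos
  have hx0 : 0 < x := by rw [hx]; positivity
  have hx' : x * (α + 2) = Real.pi * α := by rw [hx]; field_simp
  have hx2 : x < Real.pi / 2 := by nlinarith
  have hcx : 0 < Real.cos x := Real.cos_pos_of_mem_Ioo ⟨by linarith, hx2⟩
  have hcos : Real.cos (θ / α) ≤ -Real.cos x := by
    rw [← Real.cos_pi_sub]
    refine Real.cos_le_cos_of_nonneg_of_le_pi (by linarith) ?_ ?_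
    · rw [div_le_iff₀ hα0]; exact hθα.le
    · rw [le_div_iff₀ hα0]; nlinarith
  have h1 : 2 * (Real.cos (θ / α) / α) * (∫ ξ in (0 : ℝ)..1, √(1 - ξ ^ α)) ≤
      2 * (-Real.cos x / α) * ∫ ξ in (0 : ℝ)..1, √(1 - ξ ^ α) := by gcongr
  have h2 : 0 < Real.cos x * (∫ ξ in (0 : ℝ)..1, √(1 - ξ ^ α)) / α := by positivity
  have h3 : 2 * (-Real.cos x / α) * (∫ ξ in (0 : ℝ)..1, √(1 - ξ ^ α)) =
      -2 * (Real.cos x * (∫ ξ in (0 : ℝ)..1, √(1 - ξ ^ α)) / α) := by ring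
  rw [neg_div] at hbound
  linarith

theorem Complex.sqrt_pow_two (z : ℂ) : z.sqrt ^ 2 = z := by
  simp [Complex.sqrt]

theorem chord_neg_cot {τ θ s : ℝ} (hτ : Real.sin τ ≠ 0) (hθ : Real.sin θ ≠ 0) :
    chord τ (-Real.cos θ / Real.sin θ) (s / (Real.sin τ / Real.sin θ)) =
      Complex.exp (Complex.I * τ) - Complex.exp (Complex.I * θ) * s := by
  have hexp (x : ℝ) :
      Complex.exp (Complex.I * x) = (Real.cos x : ℂ) + (Real.sin x : ℂ) * Complex.I := by
    rw [mul_comm, Complex.exp_mul_I, Complex.ofReal_cos, Complex.ofReal_sin]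
  rw [hexp, hexp]
  apply Complex.ext
  · rw [chord_re]
    simp only [Complex.sub_re, Complex.add_re, Complex.mul_re, Complex.add_im, Complex.mul_im,
      Complex.ofReal_re, Complex.ofReal_im, Complex.I_re, Complex.I_im]
    field_simp
    ring
  · rw [chord_im]
    simp only [Complex.sub_im, Complex.add_re, Complex.mul_re, Complex.add_im, Complex.mul_im,
      Complex.ofReal_re, Complex.ofReal_im, Complex.I_re, Complex.I_im]
    field_simp
    ring

theorem eq_scaledRho {α θ : ℝ} (hα0 : 0 < α) (hα2 : α < 2) (ρ : ℝ → ℝ)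
    (hθ : θ ∈ Set.Ico (t0 α) (min Real.pi (Real.pi * α)))
    (hρ : ∀ g : ℝ → ℂ,
      ContinuousOn g (Set.Icc 0 (Z0 α θ)) →
      (∀ t ∈ Set.Icc (0 : ℝ) (Z0 α θ),
        g t ^ 2 = Complex.exp (Complex.I * (θ : ℂ)) * ((t ^ α : ℝ) : ℂ)
          - Complex.exp (Complex.I * ((t0 α : ℝ) : ℂ))) →
      g 0 = -Complex.I * Complex.exp (Complex.I * ((t0 α / 2 : ℝ) : ℂ)) →
      ρ θ = (∫ t in (0 : ℝ)..(Z0 α θ), g t).re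
        - 2 * Real.sin (θ / α) * ∫ ξ in (0 : ℝ)..1, Real.sqrt (1 - ξ ^ α)) :
    ρ θ = scaledRho α θ := by
  have hτ := sin_t0_pos hα0 hα2
  have hθπ := hθ.2.trans_le (min_le_left _ _)
  have hsθ := sin_pos_of_t0_le hα0 hθ.1 hθπ
  have hs0 : 0 < Real.sin (t0 α) / Real.sin θ := by positivity
  have hZ : 0 < Z0 α θ := Real.rpow_pos_of_pos hs0 _
  have hZpow : Z0 α θ ^ α = Real.sin (t0 α) / Real.sin θ := by
    rw [Z0, ← Real.rpow_mul hs0.le, one_div_mul_cancel hα0.ne', Real.rpow_one]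
  have hkappa : 0 ≤ Real.cos (t0 α) + -Real.cos θ / Real.sin θ * Real.sin (t0 α) := by
    rw [cos_add_neg_cot_mul_sin hsθ.ne']
    exact div_nonneg (Real.sin_nonneg_of_nonneg_of_le_pi (by linarith [hθ.1])
      (by linarith [t0_pos hα0])) hsθ.le
  have hchord (t : ℝ) (ht : 0 ≤ t) :
      chord (t0 α) (-Real.cos θ / Real.sin θ) ((t / Z0 α θ) ^ α) =
        Complex.exp (Complex.I * t0 α) - Complex.exp (Complex.I * θ) * (t ^ α : ℝ) := by
    rw [Real.div_rpow ht hZ.le, hZpow, chord_neg_cot hτ.ne' hsθ.ne']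
  rw [hρ (fun t => -Complex.I *
    (chord (t0 α) (-Real.cos θ / Real.sin θ) ((t / Z0 α θ) ^ α)).sqrt)]
  · rw [scaledRho, intervalIntegral.integral_const_mul,
      intervalIntegral.integral_comp_div (fun v : ℝ =>
        (chord (t0 α) (-Real.cos θ / Real.sin θ) (v ^ α)).sqrt) hZ.ne', zero_div,
      div_self hZ.ne', Complex.real_smul, ← sqrtIntegral]
    simp
  · refine continuousOn_const.mul ((continuousOn_sqrt_chord hα0 hτ hkappa).comp (by fun_prop)
      fun t ht => ⟨div_nonneg ht.1 hZ.le, (div_le_one hZ).2 ht.2⟩)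
  · intro t ht
    rw [mul_pow, Complex.sqrt_pow_two, hchord t ht.1, neg_sq, Complex.I_sq]
    ring
  · have him : (Complex.I * (t0 α : ℂ)).im = t0 α := by simp
    have hexp : Complex.I * ((t0 α / 2 : ℝ) : ℂ) = Complex.I * t0 α / 2 := by push_cast; ring
    rw [hchord 0 le_rfl, Real.zero_rpow hα0.ne', Complex.ofReal_zero, mul_zero, sub_zero,
      sqrt_eq_exp (Complex.exp_ne_zero _), Complex.log_exp, hexp]
    · rw [him]; linarith [t0_pos hα0, Real.pi_pos]
    · rw [him]; exact (t0_lt_pi hα0 hα2).le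

/-- for every `α ∈ (0,2)`, the function `ρ_α` is strictly increasing on
`[t₀(α), min(π, πα))`. -/
theorem stmt16 (α : ℝ) (hα0 : 0 < α) (hα2 : α < 2) (ρ : ℝ → ℝ)
    (hρ : ∀ θ ∈ Set.Ico (t0 α) (min Real.pi (Real.pi * α)), ∀ g : ℝ → ℂ,
      ContinuousOn g (Set.Icc 0 (Z0 α θ)) →
      (∀ t ∈ Set.Icc (0 : ℝ) (Z0 α θ),
        g t ^ 2 = Complex.exp (Complex.I * (θ : ℂ)) * ((t ^ α : ℝ) : ℂ)
          - Complex.exp (Complex.I * ((t0 α : ℝ) : ℂ))) →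
      g 0 = -Complex.I * Complex.exp (Complex.I * ((t0 α / 2 : ℝ) : ℂ)) →
      ρ θ = (∫ t in (0 : ℝ)..(Z0 α θ), g t).re
        - 2 * Real.sin (θ / α) * ∫ ξ in (0 : ℝ)..1, Real.sqrt (1 - ξ ^ α)) :
    ∀ θ₁ θ₂ : ℝ, t0 α ≤ θ₁ → θ₁ < θ₂ → θ₂ < min Real.pi (Real.pi * α) →
      ρ θ₁ < ρ θ₂ := by
  intro θ₁ θ₂ h1 h12 h2
  have hm1 : θ₁ ∈ Ico (t0 α) (min Real.pi (Real.pi * α)) := ⟨h1, h12.trans h2⟩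
  have hm2 : θ₂ ∈ Ico (t0 α) (min Real.pi (Real.pi * α)) := ⟨h1.trans h12.le, h2⟩
  rw [eq_scaledRho hα0 hα2 ρ hm1 (hρ θ₁ hm1), eq_scaledRho hα0 hα2 ρ hm2 (hρ θ₂ hm2)]
  exact strictMonoOn_scaledRho hα0 hα2 hm1 hm2 h12
end

section
/- For α = 1 (so t₀(1) = 2π/3) and every θ ∈ [2π/3, π), one has ρ_1(θ) = (2/3)·((sin(θ − 2π/3)/sin θ)^{3/2} − 1)·sin θ, and the unique zero of ρ_1 in (2π/3, π) is θ = 5π/6 (that is, θ₀(1) = 5π/6). -/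
open MeasureTheory Set

theorem t0_one : t0 1 = 2 * Real.pi / 3 := by
  norm_num [t0]

theorem integral_sqrt_one_sub : ∫ ξ in (0 : ℝ)..1, Real.sqrt (1 - ξ) = 2 / 3 := by
  rw [intervalIntegral.integral_comp_sub_left (fun x => Real.sqrt x)]
  simp only [Real.sqrt_eq_rpow]
  rw [integral_rpow (by norm_num)]
  norm_num

/-- Integral of the principal square root along a segment in the upper half plane that may
end on the nonnegative real axis. -/
theorem integral_cpow_half_segment {a b : ℂ} {Z : ℝ} (hZ : 0 ≤ Z) (hb : b ≠ 0)
    (him : ∀ t ∈ Ico 0 Z, 0 < (a - b * t).im)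
    (hend : 0 ≤ (a - b * Z).re ∨ (a - b * Z).im ≠ 0) :
    ContinuousOn (fun t : ℝ => (a - b * t) ^ (1 / 2 : ℂ)) (Icc 0 Z) ∧
    ∫ t in (0 : ℝ)..Z, (a - b * t) ^ (1 / 2 : ℂ) =
      2 / 3 * b⁻¹ * (a ^ (3 / 2 : ℂ) - (a - b * Z) ^ (3 / 2 : ℂ)) := by
  have hcont : ∀ r : ℂ, 0 < r.re →
      ContinuousOn (fun t : ℝ => (a - b * t) ^ r) (Icc 0 Z) := by
    intro r hr t ht
    have hpt : 0 ≤ (a - b * t).re ∨ (a - b * t).im ≠ 0 := by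
      rcases ht.2.eq_or_lt with h | h
      · rwa [h]
      · exact Or.inr (him t ⟨ht.1, h⟩).ne'
    have hlin : ContinuousAt (fun t : ℝ => a - b * t) t := by fun_prop
    exact (ContinuousAt.comp (g := fun z : ℂ => z ^ r) (f := fun t : ℝ => a - b * t)
      (Complex.continuousAt_cpow_const_of_re_pos hpt hr) hlin).continuousWithinAt
  have hhalf := hcont (1 / 2) (by norm_num)
  refine ⟨hhalf, ?_⟩
  rw [intervalIntegral.integral_eq_sub_of_hasDerivAt_of_le hZ
    (f := fun t : ℝ => -(2 / 3) * b⁻¹ * (a - b * t) ^ (3 / 2 : ℂ))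
    (continuousOn_const.mul (hcont (3 / 2) (by norm_num))) ?_
    (hhalf.intervalIntegrable_of_Icc hZ)]
  · simp only [Complex.ofReal_zero, mul_zero, sub_zero]
    ring
  · intro t ht
    have hlin : HasDerivAt (fun t : ℝ => a - b * t) (-b) t := by
      simpa using (((hasDerivAt_id t).ofReal_comp).const_mul b).const_sub a
    have hpow : HasDerivAt (fun t : ℝ => (a - b * t) ^ (3 / 2 : ℂ))
        ((3 / 2 : ℂ) * (a - b * t) ^ (3 / 2 - 1 : ℂ) * (-b)) t :=
      HasDerivAt.comp (h₂ := fun z : ℂ => z ^ (3 / 2 : ℂ)) (h := fun t : ℝ => a - b * t) t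
        (((hasDerivAt_id (a - b * t)).cpow_const
          (Or.inr (him t ⟨ht.1.le, ht.2⟩).ne')).congr_deriv (mul_one _)) hlin
    refine (hpow.const_mul (-(2 / 3) * b⁻¹)).congr_deriv ?_
    rw [show (3 / 2 - 1 : ℂ) = 1 / 2 by norm_num]
    field_simp

theorem exp_I_two_pi_div_three_cpow (r : ℝ) :
    Complex.exp (Complex.I * ((2 * Real.pi / 3 : ℝ) : ℂ)) ^ (r : ℂ) =
      Complex.exp (Complex.I * ((2 * Real.pi / 3 * r : ℝ) : ℂ)) := by
  have hpi := Real.pi_pos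
  rw [Complex.cpow_def_of_ne_zero (Complex.exp_ne_zero _), Complex.log_exp]
  · push_cast
    ring_nf
  · simp only [Complex.mul_im, Complex.I_re, Complex.I_im, Complex.ofReal_re, Complex.ofReal_im]
    linarith
  · simp only [Complex.mul_im, Complex.I_re, Complex.I_im, Complex.ofReal_re, Complex.ofReal_im]
    linarith

theorem exp_sub_exp_mul_div_sin {s θ : ℝ} (hθ : Real.sin θ ≠ 0) :
    Complex.exp (Complex.I * (s : ℂ)) -
        Complex.exp (Complex.I * (θ : ℂ)) * ((Real.sin s / Real.sin θ : ℝ) : ℂ) =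
      ((Real.sin (θ - s) / Real.sin θ : ℝ) : ℂ) := by
  rw [mul_comm, mul_comm Complex.I]
  apply Complex.ext
  · simp only [Complex.sub_re, Complex.re_mul_ofReal, Complex.exp_ofReal_mul_I_re,
      Complex.ofReal_re, Real.sin_sub]
    field_simp
  · simp only [Complex.sub_im, Complex.im_mul_ofReal, Complex.exp_ofReal_mul_I_im,
      Complex.ofReal_im]
    field_simp
    ring

theorem eq_five_pi_div_six_of_sin_sub_eq {θ : ℝ} (hθ : θ ∈ Ioo (2 * Real.pi / 3) Real.pi)
    (h : Real.sin (θ - 2 * Real.pi / 3) = Real.sin θ) : θ = 5 * Real.pi / 6 := by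
  have hpi := Real.pi_pos
  have h' : Real.sin (θ - 2 * Real.pi / 3) = Real.sin (Real.pi - θ) := by
    rw [h, Real.sin_pi_sub]
  have := Real.injOn_sin ⟨by linarith [hθ.1], by linarith [hθ.2]⟩
    ⟨by linarith [hθ.2], by linarith [hθ.1]⟩ h'
  linarith

/-- for `α = 1` (complex Airy operator), for every `θ ∈ [2π/3, π)` one has
`ρ_1(θ) = (2/3)·((sin(θ − 2π/3)/sin θ)^{3/2} − 1)·sin θ`, and the unique zero of `ρ_1` in
`(2π/3, π)` is `θ = 5π/6`. -/
theorem stmt19 (ρ : ℝ → ℝ)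
    (hρ : ∀ θ ∈ Set.Ico (t0 1) (min Real.pi (Real.pi * 1)), ∀ g : ℝ → ℂ,
      ContinuousOn g (Set.Icc 0 (Z0 1 θ)) →
      (∀ t ∈ Set.Icc (0 : ℝ) (Z0 1 θ),
        g t ^ 2 = Complex.exp (Complex.I * (θ : ℂ)) * ((t ^ (1 : ℝ) : ℝ) : ℂ)
          - Complex.exp (Complex.I * ((t0 1 : ℝ) : ℂ))) →
      g 0 = -Complex.I * Complex.exp (Complex.I * ((t0 1 / 2 : ℝ) : ℂ)) →
      ρ θ = (∫ t in (0 : ℝ)..(Z0 1 θ), g t).re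
        - 2 * Real.sin (θ / 1) * ∫ ξ in (0 : ℝ)..1, Real.sqrt (1 - ξ ^ (1 : ℝ))) :
    (∀ θ ∈ Set.Ico (2 * Real.pi / 3) Real.pi,
      ρ θ = 2 / 3 *
        ((Real.sin (θ - 2 * Real.pi / 3) / Real.sin θ) ^ ((3 : ℝ) / 2) - 1) * Real.sin θ) ∧
    ρ (5 * Real.pi / 6) = 0 ∧
    (∀ θ ∈ Set.Ioo (2 * Real.pi / 3) Real.pi, ρ θ = 0 → θ = 5 * Real.pi / 6) := by
  have hpi := Real.pi_pos
  have hformula : ∀ θ ∈ Set.Ico (2 * Real.pi / 3) Real.pi,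
      ρ θ = 2 / 3 *
        ((Real.sin (θ - 2 * Real.pi / 3) / Real.sin θ) ^ ((3 : ℝ) / 2) - 1) * Real.sin θ := by
    intro θ hθ
    have hsin : 0 < Real.sin θ := Real.sin_pos_of_pos_of_lt_pi (by linarith [hθ.1]) hθ.2
    have hsin0 : 0 < Real.sin (2 * Real.pi / 3) :=
      Real.sin_pos_of_pos_of_lt_pi (by linarith) (by linarith)
    have hs : 0 ≤ Real.sin (θ - 2 * Real.pi / 3) / Real.sin θ :=
      div_nonneg (Real.sin_nonneg_of_nonneg_of_le_pi (by linarith [hθ.1]) (by linarith [hθ.2]))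
        hsin.le
    have hZ : Z0 1 θ = Real.sin (2 * Real.pi / 3) / Real.sin θ := by
      simp [Z0, t0_one]
    have hend := exp_sub_exp_mul_div_sin (s := 2 * Real.pi / 3) hsin.ne'
    obtain ⟨hcont, hint⟩ := integral_cpow_half_segment
      (a := Complex.exp (Complex.I * ((2 * Real.pi / 3 : ℝ) : ℂ)))
      (b := Complex.exp (Complex.I * (θ : ℂ)))
      (div_nonneg hsin0.le hsin.le) (Complex.exp_ne_zero _)
      (by
        intro t ht
        have := (lt_div_iff₀ hsin).1 ht.2
        rw [mul_comm Complex.I, mul_comm Complex.I, Complex.sub_im, Complex.im_mul_ofReal,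
          Complex.exp_ofReal_mul_I_im, Complex.exp_ofReal_mul_I_im]
        linarith)
      (by
        rw [hend]
        exact Or.inl hs)
    have hmain := hρ θ (by simpa [t0_one] using hθ)
      (fun t => -Complex.I * (Complex.exp (Complex.I * ((2 * Real.pi / 3 : ℝ) : ℂ)) -
        Complex.exp (Complex.I * (θ : ℂ)) * t) ^ (1 / 2 : ℂ))
      (by
        rw [hZ]
        exact continuousOn_const.mul hcont)
      (by
        intro t _
        rw [mul_pow, ← Complex.cpow_nat_mul, t0_one, Real.rpow_one]
        simp)
      (by
        have := exp_I_two_pi_div_three_cpow (1 / 2)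
        rw [show 2 * Real.pi / 3 * (1 / 2) = 2 * Real.pi / 3 / 2 by ring] at this
        rw [t0_one, ← this]
        norm_num)
    have hpow : Complex.exp (Complex.I * ((2 * Real.pi / 3 : ℝ) : ℂ)) ^ (3 / 2 : ℂ) = -1 := by
      have := exp_I_two_pi_div_three_cpow (3 / 2)
      rw [show 2 * Real.pi / 3 * (3 / 2) = Real.pi by ring, mul_comm Complex.I (Real.pi : ℂ),
        Complex.exp_pi_mul_I] at this
      simpa using this
    have hcast : ((Real.sin (θ - 2 * Real.pi / 3) / Real.sin θ : ℝ) : ℂ) ^ (3 / 2 : ℂ) =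
        (((Real.sin (θ - 2 * Real.pi / 3) / Real.sin θ) ^ ((3 : ℝ) / 2) : ℝ) : ℂ) := by
      rw [Complex.ofReal_cpow hs]
      norm_num
    rw [hZ, intervalIntegral.integral_const_mul, hint, hend, hpow, hcast,
      ← Complex.exp_neg] at hmain
    simp only [Real.rpow_one, integral_sqrt_one_sub, div_one] at hmain
    generalize (Real.sin (θ - 2 * Real.pi / 3) / Real.sin θ) ^ ((3 : ℝ) / 2) = S at hmain ⊢
    have hre : (-Complex.I * (2 / 3 * Complex.exp (-(Complex.I * (θ : ℂ))) *
        (-1 - (S : ℂ)))).re = 2 / 3 * (1 + S) * Real.sin θ := by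
      rw [show -Complex.I * (2 / 3 * Complex.exp (-(Complex.I * (θ : ℂ))) * (-1 - (S : ℂ))) =
        ((2 / 3 * (1 + S) : ℝ) : ℂ) * (Complex.I * Complex.exp (((-θ : ℝ) : ℂ) * Complex.I)) by
          push_cast
          ring_nf]
      rw [Complex.re_ofReal_mul, Complex.I_mul_re, Complex.exp_ofReal_mul_I_im, Real.sin_neg,
        neg_neg]
    rw [hmain, hre]
    ring
  refine ⟨hformula, ?_, ?_⟩
  · rw [hformula _ ⟨by linarith, by linarith⟩,
      show 5 * Real.pi / 6 - 2 * Real.pi / 3 = Real.pi - 5 * Real.pi / 6 by ring,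
      Real.sin_pi_sub, div_self (Real.sin_pos_of_pos_of_lt_pi (by linarith) (by linarith)).ne',
      Real.one_rpow]
    ring
  · intro θ hθ hzero
    have hsin : 0 < Real.sin θ := Real.sin_pos_of_pos_of_lt_pi (by linarith [hθ.1]) hθ.2
    have hs : 0 ≤ Real.sin (θ - 2 * Real.pi / 3) / Real.sin θ :=
      div_nonneg (Real.sin_nonneg_of_nonneg_of_le_pi (by linarith [hθ.1]) (by linarith [hθ.2]))
        hsin.le
    rw [hformula θ ⟨hθ.1.le, hθ.2⟩] at hzero
    have hone : (Real.sin (θ - 2 * Real.pi / 3) / Real.sin θ) ^ ((3 : ℝ) / 2) = 1 := by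
      rcases mul_eq_zero.1 hzero with h | h
      · linarith
      · exact absurd h hsin.ne'
    have hratio := (Real.rpow_left_inj hs zero_le_one (by norm_num)).1
      (hone.trans (Real.one_rpow _).symm)
    exact eq_five_pi_div_six_of_sin_sub_eq hθ ((div_eq_one_iff_eq hsin.ne').1 hratio)
end
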